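/- Let (X, ω) be a weighted simplicial complex, n ≥ 0, q = dim_𝔽 ker(∂_n over 𝔽) and p = dim_𝔽 ∂_{n+1}(C_{n+1}(X; 𝔽)). Then there exist an R-basis φ̂_1, …, φ̂_q of the weighted cycle module ker ∂_n^v ⊆ C_n(X; R) and natural numbers m_1, …, m_p such that {π^{m_1} φ̂_1, …, π^{m_p} φ̂_p} is an R-basis of the weighted boundary module ∂_{n+1}^v(C_{n+1}(X; R)). -/

import Mathlib

/-!
Over the discrete valuation ring `R = F⟦X⟧`, the weighted boundaries `B` form a submodule of the
finite free module `Z` of weighted cycles, so Smith normal form gives a basis of `Z` and nonzero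
scalars `aₖ` such that the `aₖ • φₖ` form a basis of `B`. Each `aₖ` is a unit times a power of `X`,
and the unit can be dropped (`smith_aligned`).

The rest of the argument shows that `Z` and `B` have ranks `q` and `p`
(`finrank_weighted_eq`). The additive map `T : a • σ ↦ a X^{w σ} • σ` from chains over `F` to chains
over `R` satisfies `∂ᵛ T = T ∂` (`wBdry_twist`) and carries `F`-independent families to
`R`-independent ones (`twist_linearIndependent`). Hence both the rank and the nullity of `∂` on
`n`-chains over `F` are at most those of `∂ᵛ` over `R`; the two sums agree, being the number of
`n`-simplices, so both inequalities are equalities. The inclusion `B ≤ Z`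
(`wBoundaries_le_wCycles`) comes from `∂ ∂ = 0` through the same map.
-/

open Finset

variable {V : Type*} [LinearOrder V]

/-- The `n`-cells (simplices on `n+1` vertices) of a collection `S` of finite sets. -/
def nCells (S : Finset (Finset V)) (n : ℕ) : Finset (Finset V) :=
  S.filter fun σ => σ.card = n + 1

/-- The position of the vertex `x` in the simplex `σ` (number of smaller vertices). -/
def vIdx (σ : Finset V) (x : V) : ℕ := (σ.filter fun y => y < x).card

/-- The unweighted simplicial boundary operator (on all degrees at once), with
coefficients in a commutative ring `A`; it sends a `0`-simplex to `0`. -/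
noncomputable def bdry (A : Type*) [CommRing A] :
    (Finset V →₀ A) →ₗ[A] (Finset V →₀ A) :=
  Finsupp.lsum A fun σ =>
    LinearMap.toSpanSingleton A _
      (if 2 ≤ σ.card then
        ∑ x ∈ σ, ((-1 : A) ^ vIdx σ x) • Finsupp.single (σ.erase x) (1 : A)
      else 0)

/-- The weighted simplicial boundary operator over `R = 𝔽[[π]]` (with `π = PowerSeries.X`),
for the simplex-weight function `w`. -/
noncomputable def wBdry (F : Type*) [Field F] (w : Finset V → ℕ) :
    (Finset V →₀ PowerSeries F) →ₗ[PowerSeries F] (Finset V →₀ PowerSeries F) :=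
  Finsupp.lsum (PowerSeries F) fun σ =>
    LinearMap.toSpanSingleton (PowerSeries F) _
      (if 2 ≤ σ.card then
        ∑ x ∈ σ, ((-1 : PowerSeries F) ^ vIdx σ x *
            (PowerSeries.X : PowerSeries F) ^ (w (σ.erase x) - w σ)) •
          Finsupp.single (σ.erase x) (1 : PowerSeries F)
      else 0)

/-- A weighted simplicial complex `(X, ω)`: a finite abstract simplicial complex together
with a weight function `ω` that is antitone with respect to inclusion of simplices. -/
structure WeightedComplex (V : Type*) [LinearOrder V] where
  simplices : Finset (Finset V)
  nonempty_mem : ∀ σ ∈ simplices, σ.Nonempty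
  down_closed : ∀ σ ∈ simplices, ∀ τ : Finset V, τ ⊆ σ → τ.Nonempty → τ ∈ simplices
  w : Finset V → ℕ
  w_mono : ∀ σ ∈ simplices, ∀ μ ∈ simplices, σ ⊆ μ → w μ ≤ w σ

/-- A basis of a submodule, regarded as a family in the ambient module. -/
lemma basis_coe_aux {R M ι : Type*} [CommRing R] [AddCommGroup M] [Module R M]
    {N : Submodule R M} (c : Module.Basis ι R N) :
    LinearIndependent R (fun i => (c i : M)) ∧
      Submodule.span R (Set.range fun i => (c i : M)) = N := by
  refine ⟨c.linearIndependent.map' N.subtype (Submodule.ker_subtype N), ?_⟩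
  have h := congrArg (Submodule.map N.subtype) c.span_eq
  rw [Submodule.map_span, Submodule.map_subtype_top, ← Set.range_comp] at h
  exact h

/-! ### Smith normal form over a power series ring -/

/-- Smith normal form for a pair `B ≤ Z` over `F⟦X⟧`. Every nonzero diagonal entry is a unit
times a power of `X`, and the unit is absorbed into the basis of `B`. -/
lemma smith_aligned {F M : Type*} [Field F] [AddCommGroup M] [Module (PowerSeries F) M]
    (Z B : Submodule (PowerSeries F) M) [Module.Free (PowerSeries F) Z]
    [Module.Finite (PowerSeries F) Z] (hBZ : B ≤ Z) :
    ∃ (hpq : Module.finrank (PowerSeries F) B ≤ Module.finrank (PowerSeries F) Z)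
      (φ : Fin (Module.finrank (PowerSeries F) Z) → M)
      (m : Fin (Module.finrank (PowerSeries F) B) → ℕ),
      (LinearIndependent (PowerSeries F) φ ∧
        Submodule.span (PowerSeries F) (Set.range φ) = Z) ∧
      (LinearIndependent (PowerSeries F)
          (fun k => ((PowerSeries.X : PowerSeries F) ^ (m k)) • φ (Fin.castLE hpq k)) ∧
        Submodule.span (PowerSeries F)
            (Set.range fun k =>
              ((PowerSeries.X : PowerSeries F) ^ (m k)) • φ (Fin.castLE hpq k)) = B) := by
  obtain ⟨r, bM, bN, f, a, snf⟩ :=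
    Submodule.smithNormalForm (Module.finBasis (PowerSeries F) Z) (B.comap Z.subtype)
  have hr : r = Module.finrank (PowerSeries F) B := by
    rw [← (Submodule.comapSubtypeEquivOfLe hBZ).finrank_eq, Module.finrank_eq_card_basis bN,
      Fintype.card_fin]
  subst hr
  have hpq : Module.finrank (PowerSeries F) B ≤ Module.finrank (PowerSeries F) Z := by
    simpa using Fintype.card_le_of_embedding f
  have ha : ∀ k, a k ≠ 0 := by
    intro k hk
    have h := snf k
    rw [hk, zero_smul] at h
    exact bN.ne_zero k (Subtype.ext h)
  choose m u hu using fun k =>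
    IsDiscreteValuationRing.eq_unit_mul_pow_irreducible (ha k)
      (PowerSeries.X_prime (R := F)).irreducible
  obtain ⟨e, he⟩ := Equiv.Perm.exists_extending_pair (Fin.castLE hpq) f
    (Fin.castLE_injective hpq) f.injective
  have hb : ∀ k, (bM.reindex e.symm) (Fin.castLE hpq k) = bM (f k) := by
    intro k
    simp [he]
  refine ⟨hpq, fun i => ((bM.reindex e.symm) i : M), m, basis_coe_aux _, ?_⟩
  have hc := basis_coe_aux
    ((bN.unitsSMul fun k => (u k)⁻¹).map (Submodule.comapSubtypeEquivOfLe hBZ))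
  have hfun : (fun k => ((PowerSeries.X : PowerSeries F) ^ (m k)) •
        ((bM.reindex e.symm) (Fin.castLE hpq k) : M)) =
      fun k => ((((bN.unitsSMul fun k => (u k)⁻¹).map
        (Submodule.comapSubtypeEquivOfLe hBZ)) k : B) : M) := by
    funext k
    rw [hb, Module.Basis.map_apply, Submodule.comapSubtypeEquivOfLe_apply_coe,
      Module.Basis.unitsSMul_apply, Units.smul_def, Submodule.coe_smul, snf k, hu k, smul_smul,
      Units.inv_mul_cancel_left, Submodule.coe_smul]
  rw [hfun]
  exact hc

/-! ### Rank and nullity of a chain map on chains with prescribed support -/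

lemma free_finite_inf_aux {A M : Type*} [CommRing A] [IsDomain A] [IsPrincipalIdealRing A]
    [AddCommGroup M] [Module A M] (P N : Submodule A M) [Module.Free A P] [Module.Finite A P] :
    Module.Free A ↥(P ⊓ N) ∧ Module.Finite A ↥(P ⊓ N) := by
  have e := Submodule.comapSubtypeEquivOfLe (inf_le_left : P ⊓ N ≤ P)
  exact ⟨Module.Free.of_equiv e, Module.Finite.equiv e⟩

lemma free_finite_inf {A α : Type*} [CommRing A] [IsDomain A] [IsPrincipalIdealRing A]
    (s : Finset α) (N : Submodule A (α →₀ A)) :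
    Module.Free A ↥(Finsupp.supported A A (s : Set α) ⊓ N) ∧
      Module.Finite A ↥(Finsupp.supported A A (s : Set α) ⊓ N) := by
  have e := Finsupp.supportedEquivFinsupp (M := A) (R := A) (s : Set α)
  have : Module.Finite A (Finsupp.supported A A (s : Set α)) := Module.Finite.equiv e.symm
  have : Module.Free A (Finsupp.supported A A (s : Set α)) := Module.Free.of_equiv e.symm
  exact free_finite_inf_aux _ _

lemma finite_map_supported {A α M : Type*} [CommRing A] [AddCommGroup M] [Module A M]
    (s : Finset α) (g : (α →₀ A) →ₗ[A] M) :
    Module.Finite A ↥((Finsupp.supported A A (s : Set α)).map g) := by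
  have e := Finsupp.supportedEquivFinsupp (M := A) (R := A) (s : Set α)
  have : Module.Finite A (Finsupp.supported A A (s : Set α)) := Module.Finite.equiv e.symm
  infer_instance

lemma rank_nullity_aux {A M M' : Type*} [CommRing A] [IsDomain A] [AddCommGroup M]
    [Module A M] [AddCommGroup M'] [Module A M'] (P : Submodule A M) (g : M →ₗ[A] M')
    [Module.Finite A P] :
    Module.finrank A ↥(P.map g) + Module.finrank A ↥(P ⊓ LinearMap.ker g) =
      Module.finrank A P := by
  have h := (LinearMap.ker (g.domRestrict P)).finrank_quotient_add_finrank
  rw [(g.domRestrict P).quotKerEquivRange.finrank_eq, LinearMap.range_domRestrict,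
    LinearMap.ker_domRestrict] at h
  have hh : (LinearMap.ker g).comap P.subtype = (P ⊓ LinearMap.ker g).comap P.subtype := by
    ext x
    simp
  rw [hh, (Submodule.comapSubtypeEquivOfLe
    (inf_le_left : P ⊓ LinearMap.ker g ≤ P)).finrank_eq] at h
  exact h

lemma rank_nullity_supported {A α M : Type*} [CommRing A] [IsDomain A] [AddCommGroup M]
    [Module A M] (s : Finset α) (g : (α →₀ A) →ₗ[A] M) :
    Module.finrank A ↥((Finsupp.supported A A (s : Set α)).map g) +
      Module.finrank A ↥(Finsupp.supported A A (s : Set α) ⊓ LinearMap.ker g) = s.card := by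
  have e := Finsupp.supportedEquivFinsupp (M := A) (R := A) (s : Set α)
  have : Module.Finite A (Finsupp.supported A A (s : Set α)) := Module.Finite.equiv e.symm
  refine (rank_nullity_aux (Finsupp.supported A A (s : Set α)) g).trans ?_
  rw [e.finrank_eq]
  simp

/-! ### The weight-twisted coefficient extension -/

/-- The additive map `C(X; F) → C(X; F⟦X⟧)` sending `a • σ` to `a X^{w σ} • σ`. It turns the
unweighted boundary into the weighted one. -/
noncomputable def twist {α : Type*} (F : Type*) [Field F] (w : α → ℕ) :
    (α →₀ F) →+ (α →₀ PowerSeries F) :=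
  Finsupp.liftAddHom fun σ =>
    (Finsupp.singleAddHom σ).comp
      ((AddMonoidHom.mulLeft ((PowerSeries.X : PowerSeries F) ^ w σ)).comp
        (PowerSeries.C (R := F) : F →+* PowerSeries F).toAddMonoidHom)

lemma twist_single {α F : Type*} [Field F] (w : α → ℕ) (σ : α) (a : F) :
    twist F w (Finsupp.single σ a) =
      Finsupp.single σ ((PowerSeries.X : PowerSeries F) ^ w σ * PowerSeries.C a) := by
  simp [twist]

lemma twist_apply {α F : Type*} [Field F] (w : α → ℕ) (x : α →₀ F) (τ : α) :
    twist F w x τ = (PowerSeries.X : PowerSeries F) ^ w τ * PowerSeries.C (x τ) := by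
  classical
  induction x using Finsupp.induction_linear with
  | zero => simp
  | add f g hf hg => simp [hf, hg, mul_add]
  | single σ a =>
    rw [twist_single, Finsupp.single_apply, Finsupp.single_apply]
    split_ifs with h
    · rw [h]
    · simp

lemma twist_mem_supported {α F : Type*} [Field F] (w : α → ℕ) (x : α →₀ F) (s : Set α)
    (hx : x ∈ Finsupp.supported F F s) :
    twist F w x ∈ Finsupp.supported (PowerSeries F) (PowerSeries F) s := by
  rw [Finsupp.mem_supported'] at hx ⊢
  intro τ hτ
  rw [twist_apply, hx τ hτ]
  simp

/-- The twist preserves linear independence: a relation `∑ rᵢ T(vᵢ) = 0` over `F⟦X⟧` gives,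
after cancelling the power of `X` at each simplex, an `F`-linear relation between the `vᵢ` for
each coefficient of the series `rᵢ`. -/
lemma twist_linearIndependent {α F ι : Type*} [Field F] [Fintype ι] (w : α → ℕ)
    (v : ι → (α →₀ F)) (hv : LinearIndependent F v) :
    LinearIndependent (PowerSeries F) (fun i => twist F w (v i)) := by
  rw [Fintype.linearIndependent_iff] at hv ⊢
  intro r hr i
  ext k
  refine hv (fun i => PowerSeries.coeff k (r i)) ?_ i
  ext τ
  have h := DFunLike.congr_fun hr τ
  simp only [Finsupp.finsetSum_apply, Finsupp.smul_apply, smul_eq_mul, twist_apply,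
    Finsupp.zero_apply] at h ⊢
  have h2 : (PowerSeries.X : PowerSeries F) ^ w τ *
      ∑ i, r i * PowerSeries.C (v i τ) = 0 := by
    rw [← h, Finset.mul_sum]
    exact Finset.sum_congr rfl fun i _ => by ring
  have h3 := (mul_eq_zero.mp h2).resolve_left (pow_ne_zero _ PowerSeries.X_ne_zero)
  simpa using congrArg (PowerSeries.coeff k) h3

lemma exists_linearIndependent_mem {F M : Type*} [Field F] [AddCommGroup M] [Module F M]
    (N : Submodule F M) [Module.Finite F N] :
    ∃ v : Fin (Module.finrank F N) → M, LinearIndependent F v ∧ ∀ i, v i ∈ N :=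
  ⟨fun i => Module.finBasis F N i, (basis_coe_aux (Module.finBasis F N)).1,
    fun i => (Module.finBasis F N i).2⟩

lemma finrank_le_of_twist {α F : Type*} [Field F] (w : α → ℕ)
    (N : Submodule F (α →₀ F)) (N' : Submodule (PowerSeries F) (α →₀ PowerSeries F))
    [Module.Finite F N] [Module.Finite (PowerSeries F) N'] (h : ∀ x ∈ N, twist F w x ∈ N') :
    Module.finrank F N ≤ Module.finrank (PowerSeries F) N' := by
  obtain ⟨v, hv, hvN⟩ := exists_linearIndependent_mem N
  have hb : LinearIndependent (PowerSeries F)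
      (fun i => (⟨twist F w (v i), h _ (hvN i)⟩ : N')) :=
    LinearIndependent.of_comp N'.subtype (twist_linearIndependent w v hv)
  simpa using hb.fintype_card_le_finrank

/-! ### The boundary operators -/

lemma bdry_single (A : Type*) [CommRing A] (σ : Finset V) (a : A) :
    bdry A (Finsupp.single σ a) = a • (if 2 ≤ σ.card then
        ∑ x ∈ σ, ((-1 : A) ^ vIdx σ x) • Finsupp.single (σ.erase x) (1 : A)
      else 0) := by
  simp [bdry]

lemma wBdry_single (F : Type*) [Field F] (w : Finset V → ℕ) (σ : Finset V)
    (a : PowerSeries F) :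
    wBdry F w (Finsupp.single σ a) = a • (if 2 ≤ σ.card then
        ∑ x ∈ σ, ((-1 : PowerSeries F) ^ vIdx σ x *
            (PowerSeries.X : PowerSeries F) ^ (w (σ.erase x) - w σ)) •
          Finsupp.single (σ.erase x) (1 : PowerSeries F)
      else 0) := by
  simp [wBdry]

lemma vIdx_erase_of_lt (σ : Finset V) {x y : V} (hx : x ∈ σ) (h : x < y) :
    vIdx σ y = vIdx (σ.erase x) y + 1 := by
  unfold vIdx
  rw [Finset.filter_erase, Finset.card_erase_add_one (by simp [hx, h])]

lemma vIdx_erase_of_gt (σ : Finset V) {x y : V} (h : x < y) :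
    vIdx (σ.erase y) x = vIdx σ x := by
  unfold vIdx
  rw [Finset.filter_erase, Finset.erase_eq_of_notMem (by simp [h.le])]

lemma vIdx_sign (A : Type*) [CommRing A] (σ : Finset V) {x y : V} (hx : x ∈ σ) (h : x < y) :
    (-1 : A) ^ vIdx σ x * (-1) ^ vIdx (σ.erase x) y +
      (-1 : A) ^ vIdx σ y * (-1) ^ vIdx (σ.erase y) x = 0 := by
  rw [vIdx_erase_of_lt σ hx h, vIdx_erase_of_gt σ h]
  ring

/-- `∂ ∘ ∂ = 0`: the faces obtained by removing `x, y` in the two orders cancel. -/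
lemma bdry_bdry_single (A : Type*) [CommRing A] (σ : Finset V) (a : A) :
    bdry A (bdry A (Finsupp.single σ a)) = 0 := by
  rw [bdry_single, map_smul]
  split_ifs with h2
  swap
  · simp
  rw [map_sum]
  simp only [map_smul, bdry_single, one_smul]
  by_cases h3 : 3 ≤ σ.card
  swap
  · rw [Finset.sum_eq_zero, smul_zero]
    intro x hx
    rw [if_neg, smul_zero]
    rw [Finset.card_erase_of_mem hx]
    omega
  have hcard : ∀ x ∈ σ, 2 ≤ (σ.erase x).card := by
    intro x hx
    rw [Finset.card_erase_of_mem hx]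
    omega
  rw [Finset.sum_congr rfl fun x hx => by rw [if_pos (hcard x hx), Finset.smul_sum],
    Finset.sum_sigma']
  convert smul_zero a
  refine Finset.sum_involution (fun z _ => ⟨z.2, z.1⟩) ?_ ?_ ?_ ?_
  · rintro ⟨x, y⟩ hz
    simp only [Finset.mem_sigma, Finset.mem_erase] at hz
    obtain ⟨hx, hyx, hy⟩ := hz
    simp only [smul_smul]
    rw [Finset.erase_right_comm (a := y) (b := x), ← add_smul]
    rcases lt_or_gt_of_ne hyx with h | h
    · rw [add_comm, vIdx_sign A σ hy h, zero_smul]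
    · rw [vIdx_sign A σ hx h, zero_smul]
  · rintro ⟨x, y⟩ hz _ heq
    simp only [Finset.mem_sigma, Finset.mem_erase] at hz
    simp only [Sigma.mk.injEq] at heq
    exact hz.2.1 heq.1
  · rintro ⟨x, y⟩ hz
    simp only [Finset.mem_sigma, Finset.mem_erase] at hz ⊢
    exact ⟨hz.2.2, hz.2.1.symm, hz.1⟩
  · rintro ⟨x, y⟩ hz
    rfl

lemma wBdry_twist_single (F : Type*) [Field F] (K : WeightedComplex V) (σ : Finset V)
    (hσ : σ ∈ K.simplices) (a : F) :
    wBdry F K.w (twist F K.w (Finsupp.single σ a)) =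
      twist F K.w (bdry F (Finsupp.single σ a)) := by
  rw [twist_single, wBdry_single, bdry_single]
  split_ifs with h2
  swap
  · simp
  rw [Finset.smul_sum, Finset.smul_sum, map_sum]
  refine Finset.sum_congr rfl fun x hx => ?_
  have hne : (σ.erase x).Nonempty := by
    rw [← Finset.card_pos, Finset.card_erase_of_mem hx]
    omega
  have hw := K.w_mono _ (K.down_closed σ hσ _ (Finset.erase_subset x σ) hne) σ hσ
    (Finset.erase_subset x σ)
  have hX : (PowerSeries.X : PowerSeries F) ^ K.w (σ.erase x) =
      PowerSeries.X ^ K.w σ * PowerSeries.X ^ (K.w (σ.erase x) - K.w σ) := by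
    rw [← pow_add, Nat.add_sub_cancel' hw]
  simp only [Finsupp.smul_single, smul_eq_mul, mul_one, twist_single, hX, map_mul, map_pow,
    map_neg, map_one]
  congr 1
  ring

/-- On chains of the complex the twist intertwines the unweighted and weighted boundaries. -/
lemma wBdry_twist (F : Type*) [Field F] (K : WeightedComplex V) (x : Finset V →₀ F)
    (hx : x ∈ Finsupp.supported F F (K.simplices : Set (Finset V))) :
    wBdry F K.w (twist F K.w x) = twist F K.w (bdry F x) := by
  rw [← Finsupp.sum_single x]
  simp only [Finsupp.sum, map_sum]
  exact Finset.sum_congr rfl fun σ hσ => wBdry_twist_single F K σ (hx hσ) _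

lemma bdry_mem_supported (F : Type*) [Field F] (K : WeightedComplex V) (n : ℕ) (σ : Finset V)
    (hσ : σ ∈ nCells K.simplices (n + 1)) :
    bdry F (Finsupp.single σ (1 : F)) ∈
      Finsupp.supported F F (nCells K.simplices n : Set (Finset V)) := by
  rw [nCells, Finset.mem_filter] at hσ
  rw [bdry_single, if_pos (by omega), one_smul]
  refine Submodule.sum_mem _ fun x hx => Submodule.smul_mem _ _ ?_
  have hc := Finset.card_erase_of_mem hx
  refine Finsupp.single_mem_supported F 1 ?_
  rw [nCells, Finset.mem_coe, Finset.mem_filter]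
  refine ⟨K.down_closed σ hσ.1 _ (Finset.erase_subset x σ) ?_, by omega⟩
  rw [← Finset.card_pos]
  omega

lemma supported_nCells_le (A : Type*) [CommRing A] (K : WeightedComplex V) (n : ℕ) :
    Finsupp.supported A A (nCells K.simplices n : Set (Finset V)) ≤
      Finsupp.supported A A (K.simplices : Set (Finset V)) :=
  Finsupp.supported_mono (by exact_mod_cast Finset.filter_subset _ _)

/-- Weighted boundaries are weighted cycles. On a simplex `σ`, the multiple `X^{w σ} ∂ᵛσ` is the
twist of `∂σ`, so the claim follows from the unweighted one by cancelling `X^{w σ}`. -/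
lemma wBoundaries_le_wCycles (F : Type*) [Field F] (K : WeightedComplex V) (n : ℕ) :
    (Finsupp.supported (PowerSeries F) (PowerSeries F)
        (nCells K.simplices (n + 1) : Set (Finset V))).map (wBdry F K.w) ≤
      Finsupp.supported (PowerSeries F) (PowerSeries F)
          (nCells K.simplices n : Set (Finset V)) ⊓ LinearMap.ker (wBdry F K.w) := by
  rw [Finsupp.supported_eq_span_single, Submodule.map_span, Submodule.span_le]
  rintro _ ⟨_, ⟨σ, hσ, rfl⟩, rfl⟩
  have hσK : σ ∈ K.simplices := (Finset.mem_filter.mp hσ).1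
  have hsm : (PowerSeries.X : PowerSeries F) ^ K.w σ •
      wBdry F K.w (Finsupp.single σ (1 : PowerSeries F)) =
        twist F K.w (bdry F (Finsupp.single σ 1)) := by
    rw [← wBdry_twist_single F K σ hσK, twist_single, ← map_smul]
    simp
  have hX : (PowerSeries.X : PowerSeries F) ^ K.w σ ≠ 0 := pow_ne_zero _ PowerSeries.X_ne_zero
  have hmem := bdry_mem_supported F K n σ hσ
  refine ⟨?_, ?_⟩
  · have h := twist_mem_supported K.w _ _ hmem
    rw [← hsm] at h
    rw [SetLike.mem_coe, Finsupp.mem_supported'] at *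
    intro τ hτ
    exact (mul_eq_zero.mp (h τ hτ)).resolve_left hX
  · rw [SetLike.mem_coe, LinearMap.mem_ker]
    refine (smul_eq_zero.mp ?_).resolve_left hX
    rw [← map_smul, hsm, wBdry_twist F K _ (supported_nCells_le F K n hmem), bdry_bdry_single,
      map_zero]

/-- Passing from `F` to `F⟦X⟧` with weights changes neither the rank of the boundary on `n`-chains
nor its nullity: the twist shows that neither can drop, and their sum is the number of
`n`-simplices in both cases. -/
lemma finrank_weighted_eq (F : Type*) [Field F] (K : WeightedComplex V) (n : ℕ) :
    Module.finrank F ↥((Finsupp.supported F F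
        (nCells K.simplices n : Set (Finset V))).map (bdry F)) =
      Module.finrank (PowerSeries F) ↥((Finsupp.supported (PowerSeries F) (PowerSeries F)
        (nCells K.simplices n : Set (Finset V))).map (wBdry F K.w)) ∧
    Module.finrank F ↥(Finsupp.supported F F
        (nCells K.simplices n : Set (Finset V)) ⊓ LinearMap.ker (bdry F)) =
      Module.finrank (PowerSeries F) ↥(Finsupp.supported (PowerSeries F) (PowerSeries F)
        (nCells K.simplices n : Set (Finset V)) ⊓ LinearMap.ker (wBdry F K.w)) := by
  have := finite_map_supported (nCells K.simplices n) (bdry (V := V) F)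
  have := finite_map_supported (nCells K.simplices n) (wBdry (V := V) F K.w)
  have := (free_finite_inf (nCells K.simplices n) (LinearMap.ker (bdry (V := V) F))).2
  have := (free_finite_inf (nCells K.simplices n) (LinearMap.ker (wBdry (V := V) F K.w))).2
  have h1 := rank_nullity_supported (nCells K.simplices n) (bdry (V := V) F)
  have h2 := rank_nullity_supported (nCells K.simplices n) (wBdry (V := V) F K.w)
  have h3 := finrank_le_of_twist K.w
    ((Finsupp.supported F F (nCells K.simplices n : Set (Finset V))).map (bdry F))
    ((Finsupp.supported (PowerSeries F) (PowerSeries F)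
        (nCells K.simplices n : Set (Finset V))).map (wBdry F K.w)) (by
      rintro _ ⟨x, hx, rfl⟩
      exact ⟨twist F K.w x, twist_mem_supported K.w x _ hx,
        wBdry_twist F K x (supported_nCells_le F K n hx)⟩)
  have h4 := finrank_le_of_twist K.w
    (Finsupp.supported F F (nCells K.simplices n : Set (Finset V)) ⊓ LinearMap.ker (bdry F))
    (Finsupp.supported (PowerSeries F) (PowerSeries F)
        (nCells K.simplices n : Set (Finset V)) ⊓ LinearMap.ker (wBdry F K.w)) (by
      rintro x ⟨hx, hk⟩
      refine ⟨twist_mem_supported K.w x _ hx, ?_⟩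
      rw [SetLike.mem_coe, LinearMap.mem_ker] at hk ⊢
      rw [wBdry_twist F K x (supported_nCells_le F K n hx), hk, map_zero])
  omega

set_option synthInstance.maxHeartbeats 1000000
set_option maxHeartbeats 1000000

/-- Let `(X, ω)` be a weighted complex, `n ≥ 0`,
`q = dim_𝔽 ker(∂ₙ over 𝔽)` and `p = dim_𝔽 ∂_{n+1}(C_{n+1}(X; 𝔽))`.  Then there exist an
`R`-basis `φ̂_1, …, φ̂_q` of the weighted cycle module `ker ∂ₙᵛ ⊆ C_n(X; R)` and natural
numbers `m_1, …, m_p` such that `{π^{m_1} φ̂_1, …, π^{m_p} φ̂_p}` is an `R`-basis of the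
weighted boundary module `∂_{n+1}ᵛ(C_{n+1}(X; R))`. -/
theorem aligned_bases_exist
    (F : Type*) [Field F] (K : WeightedComplex V) (n : ℕ) (q p : ℕ)
    (hq : q = Module.finrank F
      ↥(Finsupp.supported F F ↑(nCells K.simplices n) ⊓ LinearMap.ker (bdry (V := V) F)))
    (hp : p = Module.finrank F
      ↥((Finsupp.supported F F ↑(nCells K.simplices (n + 1))).map (bdry (V := V) F))) :
    ∃ (hpq : p ≤ q) (φ : Fin q → (Finset V →₀ PowerSeries F)) (m : Fin p → ℕ),
      (LinearIndependent (PowerSeries F) φ ∧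
        Submodule.span (PowerSeries F) (Set.range φ) =
          Finsupp.supported (PowerSeries F) (PowerSeries F) ↑(nCells K.simplices n) ⊓
            LinearMap.ker (wBdry (V := V) F K.w)) ∧
      (LinearIndependent (PowerSeries F)
          (fun k : Fin p =>
            ((PowerSeries.X : PowerSeries F) ^ (m k)) • φ (Fin.castLE hpq k)) ∧
        Submodule.span (PowerSeries F)
            (Set.range fun k : Fin p =>
              ((PowerSeries.X : PowerSeries F) ^ (m k)) • φ (Fin.castLE hpq k)) =
          (Finsupp.supported (PowerSeries F) (PowerSeries F)
              ↑(nCells K.simplices (n + 1))).map (wBdry (V := V) F K.w)) := by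
  obtain rfl := hq.trans (finrank_weighted_eq F K n).2
  obtain rfl := hp.trans (finrank_weighted_eq F K (n + 1)).1
  have := (free_finite_inf (nCells K.simplices n) (LinearMap.ker (wBdry (V := V) F K.w))).1
  have := (free_finite_inf (nCells K.simplices n) (LinearMap.ker (wBdry (V := V) F K.w))).2
  exact smith_aligned _ _ (wBoundaries_le_wCycles F K n)
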